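/- arXiv:2511.15053 — 5 statements merged into one kernel-verified Lean document; each statement's English description precedes it below -/
import Mathlib

section
/- Let E be a real normed vector space, n ∈ ℕ, and B ≥ 0. Let p : Fin (n+1) → E → ℝ be such that for each h, the map p h is differentiable on E, 0 < p h x ≤ 1 for all x ∈ E, and ‖fderiv ℝ (p h) x‖ ≤ B · p h x for all x ∈ E. Then for all x, y ∈ E, |∏_{h} p h x − ∏_{h} p h y| ≤ (n+1) · B · ‖x − y‖. -/
theorem stmt_2 {E : Type*} [NormedAddCommGroup E] [NormedSpace ℝ E]
    (n : ℕ) (B : ℝ) (hB : 0 ≤ B)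
    (p : Fin (n + 1) → E → ℝ)
    (hdiff : ∀ h, Differentiable ℝ (p h))
    (hpos : ∀ h x, 0 < p h x) (hle : ∀ h x, p h x ≤ 1)
    (hgrad : ∀ h x, ‖fderiv ℝ (p h) x‖ ≤ B * p h x) :
    ∀ x y : E, |(∏ h, p h x) - ∏ h, p h y| ≤ ((n : ℝ) + 1) * B * ‖x - y‖ := by
  intro x y
  have hlip : ∀ h, |p h x - p h y| ≤ B * ‖x - y‖ := by
    intro h
    have := Convex.norm_image_sub_le_of_norm_fderiv_le (𝕜 := ℝ) (f := p h) (C := B)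
      (s := Set.univ) (x := y) (y := x) (fun z _ => hdiff h z)
      (fun z _ => (hgrad h z).trans (mul_le_of_le_one_right hB (hle h z)))
      convex_univ trivial trivial
    simpa [Real.norm_eq_abs] using this
  have key : ∀ s : Finset (Fin (n + 1)),
      |(∏ h ∈ s, p h x) - ∏ h ∈ s, p h y| ≤ (s.card : ℝ) * (B * ‖x - y‖) := by
    intro s
    induction s using Finset.induction_on with
    | empty => simp
    | insert a s ha ih =>
      rw [Finset.prod_insert ha, Finset.prod_insert ha, Finset.card_insert_of_notMem ha]
      have e : p a x * ∏ h ∈ s, p h x - p a y * ∏ h ∈ s, p h y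
          = p a x * ((∏ h ∈ s, p h x) - ∏ h ∈ s, p h y)
            + (p a x - p a y) * ∏ h ∈ s, p h y := by ring
      have h0 : 0 ≤ ∏ h ∈ s, p h y := Finset.prod_nonneg fun i _ => (hpos i y).le
      have h1 : ∏ h ∈ s, p h y ≤ 1 :=
        Finset.prod_le_one (fun i _ => (hpos i y).le) fun i _ => hle i y
      rw [e]
      refine (abs_add_le _ _).trans ?_
      rw [abs_mul, abs_mul, abs_of_pos (hpos a x), abs_of_nonneg h0]
      have h2 := mul_le_of_le_one_left (abs_nonneg ((∏ h ∈ s, p h x) - ∏ h ∈ s, p h y)) (hle a x)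
      have h3 := mul_le_of_le_one_right (abs_nonneg (p a x - p a y)) h1
      have h4 := hlip a
      push_cast
      linarith
  have := key Finset.univ
  simp only [Finset.card_univ, Fintype.card_fin] at this
  push_cast at this
  linarith
end

section
/- Let N ∈ ℕ with N ≥ 1 and fix j ∈ Fin N. Let W : ℕ → Matrix (Fin N) (Fin N) ℝ be a sequence of matrices each of whose column sums equal one, i.e., ∑_{i} W m i l = 1 for all m ∈ ℕ and all l ∈ Fin N. Let μ : ℕ → ℝ with μ 0 = 0, and let x : ℕ → (Fin N → ℝ) satisfy x 0 = 0 and, for all m ∈ ℕ, x (m+1) = (W m).mulVec (x m + (N · (μ (m+1) − μ m)) • Pi.single j 1). Then for every m ∈ ℕ, (1/N) · ∑_{i} x m i = μ m. -/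
theorem stmt_8 (N : ℕ) (hN : 1 ≤ N) (j : Fin N)
    (W : ℕ → Matrix (Fin N) (Fin N) ℝ)
    (hW : ∀ m l, ∑ i, W m i l = 1)
    (μ : ℕ → ℝ) (hμ0 : μ 0 = 0)
    (x : ℕ → Fin N → ℝ) (hx0 : x 0 = 0)
    (hx : ∀ m, x (m + 1)
      = (W m).mulVec
          (x m + ((N : ℝ) * (μ (m + 1) - μ m)) • (Pi.single j 1 : Fin N → ℝ))) :
    ∀ m, (1 / (N : ℝ)) * ∑ i, x m i = μ m := by
  have hN0 : (N : ℝ) ≠ 0 := by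
    have : N ≠ 0 := by omega
    exact_mod_cast this
  have hsum : ∀ m (v : Fin N → ℝ), ∑ i, (W m).mulVec v i = ∑ l, v l := by
    intro m v
    simp only [Matrix.mulVec, dotProduct]
    rw [Finset.sum_comm]
    refine Finset.sum_congr rfl fun l _ => ?_
    rw [← Finset.sum_mul, hW, one_mul]
  have key : ∀ m, ∑ i, x m i = (N : ℝ) * μ m := by
    intro m
    induction m with
    | zero => simp [hx0, hμ0]
    | succ m ih =>
      rw [hx m, hsum]
      simp only [Pi.add_apply, Pi.smul_apply, smul_eq_mul, Finset.sum_add_distrib,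
        ← Finset.mul_sum, ih, Finset.sum_pi_single', Finset.mem_univ, if_true]
      ring
  intro m
  rw [key m]
  field_simp
end

section
/- Let E be a real Hilbert space (a complete real inner product space), K ⊆ E a nonempty closed convex set, η > 0 a real number, x ∈ K, and g ∈ E. Let x⁺ ∈ K be the metric projection of x + η • g onto K, i.e., x⁺ ∈ K and ‖(x + η • g) − x⁺‖ ≤ ‖(x + η • g) − y‖ for all y ∈ K. Then for every y ∈ K with ‖y − x‖ ≤ 1, ⟪g, y − x⟫ ≤ (1/η + ‖g‖) · ‖x⁺ − x‖. -/
open Real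
open scoped RealInnerProductSpace

theorem stmt_11 {E : Type*} [NormedAddCommGroup E] [InnerProductSpace ℝ E] [CompleteSpace E]
    (K : Set E) (hKne : K.Nonempty) (hKcl : IsClosed K) (hKconv : Convex ℝ K)
    (η : ℝ) (hη : 0 < η) (x : E) (hx : x ∈ K) (g : E) (xp : E) (hxp : xp ∈ K)
    (hproj : ∀ y ∈ K, ‖(x + η • g) - xp‖ ≤ ‖(x + η • g) - y‖) :
    ∀ y ∈ K, ‖y - x‖ ≤ 1 → ⟪g, y - x⟫ ≤ (1 / η + ‖g‖) * ‖xp - x‖ := by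
  intro y hy hyx
  have : Nonempty K := ⟨⟨xp, hxp⟩⟩
  have hmin : ‖(x + η • g) - xp‖ = ⨅ w : K, ‖(x + η • g) - w‖ := by
    apply le_antisymm
    · exact le_ciInf fun w => hproj w w.2
    · exact ciInf_le (f := fun w : K => ‖(x + η • g) - w‖)
        ⟨0, by rintro _ ⟨w, rfl⟩; exact norm_nonneg _⟩ ⟨xp, hxp⟩
  have hvi := (norm_eq_iInf_iff_real_inner_le_zero hKconv hxp).1 hmin y hy
  have e1 : (x + η • g) - xp = η • g - (xp - x) := by abel
  have e2 : y - xp = (y - x) - (xp - x) := by abel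
  rw [e1, e2] at hvi
  generalize y - x = v at *
  generalize xp - x = d at *
  simp only [inner_sub_left, inner_sub_right, real_inner_smul_left,
    real_inner_self_eq_norm_sq] at hvi
  have h1 := real_inner_le_norm g d
  have h2 := real_inner_le_norm d v
  have h3 : ‖d‖ * ‖v‖ ≤ ‖d‖ := mul_le_of_le_one_right (norm_nonneg _) hyx
  have h4 := mul_le_mul_of_nonneg_left h1 hη.le
  have h5 : η * ((1 / η + ‖g‖) * ‖d‖) = ‖d‖ + η * (‖g‖ * ‖d‖) := by
    field_simp
  refine le_of_mul_le_mul_left ?_ hη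
  rw [h5]
  nlinarith [sq_nonneg ‖d‖]
end

section
/- Let E be a real Hilbert space (a complete real inner product space), K ⊆ E a nonempty closed convex set, η > 0 a real number, x ∈ K, and g, v ∈ E. Let x⁺ ∈ K be the metric projection of x + η • g onto K, i.e., x⁺ ∈ K and ‖(x + η • g) − x⁺‖ ≤ ‖(x + η • g) − y‖ for all y ∈ K. Then (sSup {⟪v, y − x⁺⟫ | y ∈ K, ‖y − x⁺‖ ≤ 1})² ≤ (2/η²) · ‖x⁺ − x‖² + 2 · ‖v − g‖². (The supremum is over a nonempty set containing the value 0, attained at y = x⁺, and is bounded above by ‖v‖.) -/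
open scoped RealInnerProductSpace

theorem stmt_13 {E : Type*} [NormedAddCommGroup E] [InnerProductSpace ℝ E] [CompleteSpace E]
    (K : Set E) (hKne : K.Nonempty) (hKcl : IsClosed K) (hKconv : Convex ℝ K)
    (η : ℝ) (hη : 0 < η) (x : E) (hx : x ∈ K) (g v : E) (xp : E) (hxp : xp ∈ K)
    (hproj : ∀ y ∈ K, ‖(x + η • g) - xp‖ ≤ ‖(x + η • g) - y‖) :
    (sSup {r : ℝ | ∃ y ∈ K, ‖y - xp‖ ≤ 1 ∧ r = ⟪v, y - xp⟫}) ^ 2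
      ≤ (2 / η ^ 2) * ‖xp - x‖ ^ 2 + 2 * ‖v - g‖ ^ 2 := by
  have hvi : ∀ w ∈ K, ⟪(x + η • g) - xp, w - xp⟫ ≤ 0 := by
    rw [← norm_eq_iInf_iff_real_inner_le_zero hKconv hxp]
    have : Nonempty K := ⟨⟨xp, hxp⟩⟩
    apply le_antisymm
    · exact le_ciInf fun w => hproj w.1 w.2
    · exact ciInf_le (f := fun w : K => ‖(x + η • g) - w‖)
        ⟨0, by rintro _ ⟨w, rfl⟩; exact norm_nonneg _⟩ ⟨xp, hxp⟩
  have hb : ∀ r ∈ {r : ℝ | ∃ y ∈ K, ‖y - xp‖ ≤ 1 ∧ r = ⟪v, y - xp⟫},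
      r ≤ ‖xp - x‖ / η + ‖v - g‖ := by
    rintro r ⟨y, hy, hn, rfl⟩
    have h1 := hvi y hy
    have e1 : (x + η • g) - xp = η • g - (xp - x) := by abel
    rw [e1, inner_sub_left, real_inner_smul_left] at h1
    have h2 : ⟪xp - x, y - xp⟫ ≤ ‖xp - x‖ :=
      (real_inner_le_norm _ _).trans (mul_le_of_le_one_right (norm_nonneg _) hn)
    have h3 : ⟪v - g, y - xp⟫ ≤ ‖v - g‖ :=
      (real_inner_le_norm _ _).trans (mul_le_of_le_one_right (norm_nonneg _) hn)
    have h4 : ⟪g, y - xp⟫ ≤ ‖xp - x‖ / η := by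
      rw [le_div_iff₀ hη]; linarith
    rw [inner_sub_left] at h3
    linarith
  have h0 : (0 : ℝ) ∈ {r : ℝ | ∃ y ∈ K, ‖y - xp‖ ≤ 1 ∧ r = ⟪v, y - xp⟫} :=
    ⟨xp, hxp, by simp, by simp⟩
  have hS0 := le_csSup ⟨_, hb⟩ h0
  have hS1 := csSup_le ⟨0, h0⟩ hb
  have e2 : (2 / η ^ 2) * ‖xp - x‖ ^ 2 = 2 * (‖xp - x‖ / η) ^ 2 := by
    rw [div_pow]; ring
  rw [e2]
  refine (pow_le_pow_left₀ hS0 hS1 2).trans ?_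
  nlinarith [sq_nonneg (‖xp - x‖ / η - ‖v - g‖)]
end

section
/- Let E and F be real Hilbert spaces (complete real inner product spaces), Θ ⊆ E and U ⊆ F nonempty closed convex sets, η_θ > 0 and η_μ > 0 real numbers, θ ∈ Θ, μ ∈ U, g, v_θ ∈ E, and h, v_μ ∈ F. Let θ⁺ ∈ Θ be the metric projection of θ + η_θ • g onto Θ and μ⁺ ∈ U the metric projection of μ + η_μ • h onto U. Then (sSup {⟪v_μ, μ' − μ⁺⟫ | μ' ∈ U, ‖μ' − μ⁺‖ ≤ 1})² + (sSup {⟪v_θ, θ' − θ⟫ | θ' ∈ Θ, ‖θ' − θ‖ ≤ 1})² ≤ (2/η_μ²) · ‖μ⁺ − μ‖² + 2 · ‖v_μ − h‖² + 2 · (1/η_θ + ‖g‖)² · ‖θ⁺ − θ‖² + 2 · ‖v_θ − g‖². (Both suprema are over nonempty sets containing the value 0 and bounded above by ‖v_μ‖ and ‖v_θ‖ respectively.) -/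
open scoped RealInnerProductSpace

lemma proj_vi {E : Type*} [NormedAddCommGroup E] [InnerProductSpace ℝ E]
    {K : Set E} (hK : Convex ℝ K) {u v : E} (hv : v ∈ K)
    (hp : ∀ y ∈ K, ‖u - v‖ ≤ ‖u - y‖) (w : E) (hw : w ∈ K) : ⟪u - v, w - v⟫ ≤ 0 := by
  refine (norm_eq_iInf_iff_real_inner_le_zero hK hv).1 ?_ w hw
  haveI : Nonempty K := ⟨⟨v, hv⟩⟩
  apply le_antisymm
  · exact le_ciInf fun y => hp y y.2
  · exact ciInf_le (f := fun w : K => ‖u - w‖)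
      ⟨0, by rintro _ ⟨y, rfl⟩; exact norm_nonneg _⟩ ⟨v, hv⟩

lemma step_vi {E : Type*} [NormedAddCommGroup E] [InnerProductSpace ℝ E]
    {K : Set E} (hK : Convex ℝ K) {x g v : E} {η : ℝ} (hη : 0 < η) (hv : v ∈ K)
    (hp : ∀ y ∈ K, ‖(x + η • g) - v‖ ≤ ‖(x + η • g) - y‖) (w : E) (hw : w ∈ K) :
    ⟪g, w - v⟫ ≤ 1 / η * ⟪v - x, w - v⟫ := by
  have h1 := proj_vi hK hv hp w hw
  have e : x + η • g - v = η • g - (v - x) := by abel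
  rw [e, inner_sub_left, real_inner_smul_left] at h1
  rw [one_div, ← div_eq_inv_mul, le_div_iff₀ hη]
  linarith

lemma inner_le_of_norm_le_one {E : Type*} [NormedAddCommGroup E] [InnerProductSpace ℝ E]
    (a b : E) (hb : ‖b‖ ≤ 1) : ⟪a, b⟫ ≤ ‖a‖ :=
  (real_inner_le_norm a b).trans (mul_le_of_le_one_right (norm_nonneg a) hb)

lemma sSup_sq_le {E : Type*} [NormedAddCommGroup E] [InnerProductSpace ℝ E]
    (K : Set E) (x v : E) (hx : x ∈ K) (a b : ℝ)
    (hle : ∀ y ∈ K, ‖y - x‖ ≤ 1 → ⟪v, y - x⟫ ≤ a + b) :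
    (sSup {r : ℝ | ∃ y ∈ K, ‖y - x‖ ≤ 1 ∧ r = ⟪v, y - x⟫}) ^ 2 ≤ 2 * a ^ 2 + 2 * b ^ 2 := by
  have hmem : (0 : ℝ) ∈ {r : ℝ | ∃ y ∈ K, ‖y - x‖ ≤ 1 ∧ r = ⟪v, y - x⟫} :=
    ⟨x, hx, by simp, by simp⟩
  have hub : ∀ r ∈ {r : ℝ | ∃ y ∈ K, ‖y - x‖ ≤ 1 ∧ r = ⟪v, y - x⟫}, r ≤ a + b := by
    rintro r ⟨y, hy, h1, rfl⟩
    exact hle y hy h1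
  have h0 := le_csSup ⟨a + b, hub⟩ hmem
  have h1 := csSup_le ⟨0, hmem⟩ hub
  have h2 := pow_le_pow_left₀ h0 h1 2
  nlinarith [sq_nonneg (a - b)]

theorem stmt_14 {E F : Type*}
    [NormedAddCommGroup E] [InnerProductSpace ℝ E] [CompleteSpace E]
    [NormedAddCommGroup F] [InnerProductSpace ℝ F] [CompleteSpace F]
    (Θ : Set E) (hΘne : Θ.Nonempty) (hΘcl : IsClosed Θ) (hΘconv : Convex ℝ Θ)
    (U : Set F) (hUne : U.Nonempty) (hUcl : IsClosed U) (hUconv : Convex ℝ U)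
    (ηθ ημ : ℝ) (hηθ : 0 < ηθ) (hημ : 0 < ημ)
    (θ : E) (hθ : θ ∈ Θ) (μ : F) (hμ : μ ∈ U)
    (g vθ : E) (h vμ : F)
    (θp : E) (hθp : θp ∈ Θ)
    (hθproj : ∀ y ∈ Θ, ‖(θ + ηθ • g) - θp‖ ≤ ‖(θ + ηθ • g) - y‖)
    (μp : F) (hμp : μp ∈ U)
    (hμproj : ∀ y ∈ U, ‖(μ + ημ • h) - μp‖ ≤ ‖(μ + ημ • h) - y‖) :
    (sSup {r : ℝ | ∃ μ' ∈ U, ‖μ' - μp‖ ≤ 1 ∧ r = ⟪vμ, μ' - μp⟫}) ^ 2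
        + (sSup {r : ℝ | ∃ θ' ∈ Θ, ‖θ' - θ‖ ≤ 1 ∧ r = ⟪vθ, θ' - θ⟫}) ^ 2
      ≤ (2 / ημ ^ 2) * ‖μp - μ‖ ^ 2 + 2 * ‖vμ - h‖ ^ 2
          + 2 * (1 / ηθ + ‖g‖) ^ 2 * ‖θp - θ‖ ^ 2 + 2 * ‖vθ - g‖ ^ 2 := by
  have hμb := sSup_sq_le U μp vμ hμp (1 / ημ * ‖μp - μ‖) ‖vμ - h‖ (by
    intro y hy h1
    have e : ⟪vμ, y - μp⟫ = ⟪vμ - h, y - μp⟫ + ⟪h, y - μp⟫ := by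
      rw [inner_sub_left]; ring
    have h2 := step_vi hUconv hημ hμp hμproj y hy
    have h3 := mul_le_mul_of_nonneg_left (inner_le_of_norm_le_one (μp - μ) _ h1)
      (one_div_pos.2 hημ).le
    have h4 := inner_le_of_norm_le_one (vμ - h) _ h1
    linarith)
  have hθb := sSup_sq_le Θ θ vθ hθ ((1 / ηθ + ‖g‖) * ‖θp - θ‖) ‖vθ - g‖ (by
    intro y hy h1
    have e : ⟪vθ, y - θ⟫ = ⟪vθ - g, y - θ⟫ + ⟪g, y - θp⟫ + ⟪g, θp - θ⟫ := by
      simp only [inner_sub_left, inner_sub_right]; ring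
    have h2 := step_vi hΘconv hηθ hθp hθproj y hy
    have e2 : ⟪θp - θ, y - θp⟫ = ⟪θp - θ, y - θ⟫ - ‖θp - θ‖ ^ 2 := by
      rw [← real_inner_self_eq_norm_sq, ← inner_sub_right]; congr 1; abel
    have h5 := inner_le_of_norm_le_one (θp - θ) _ h1
    have h6 : ⟪θp - θ, y - θp⟫ ≤ ‖θp - θ‖ := by
      rw [e2]; linarith [sq_nonneg ‖θp - θ‖]
    have h3 := mul_le_mul_of_nonneg_left h6 (one_div_pos.2 hηθ).le
    have h4 := inner_le_of_norm_le_one (vθ - g) _ h1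
    have h7 := real_inner_le_norm g (θp - θ)
    linarith)
  have e1 : 2 * (1 / ημ * ‖μp - μ‖) ^ 2 = (2 / ημ ^ 2) * ‖μp - μ‖ ^ 2 := by
    field_simp
  have e2 : 2 * ((1 / ηθ + ‖g‖) * ‖θp - θ‖) ^ 2
      = 2 * (1 / ηθ + ‖g‖) ^ 2 * ‖θp - θ‖ ^ 2 := by ring
  rw [e1] at hμb
  rw [e2] at hθb
  linarith
end
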